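/- arXiv:quant-ph/9707053 — 3 statements merged into one kernel-verified Lean document; each statement's English description precedes it below -/
import Mathlib

section
/- For every integer d ≥ 2 and every angle θ with 0 ≤ θ ≤ π/2, one has ∫₀^θ (sin φ)^{d−2} dφ ≤ (sin θ)^{d−1} · ∫₀^{π/2} (sin ψ)^{d−2} dψ. -/
open Real intervalIntegral

/-!
Put `s = sin θ`. The substitution `sin φ = s * sin ψ` maps `[0, π / 2]` onto `[0, θ]`, with Jacobian
`dφ / dψ = s * (cos ψ / cos φ)`. Since `sin φ ≤ sin ψ`, we have `cos ψ ≤ cos φ`, so the Jacobian is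
at most `s`. The integrand becomes `(sin φ) ^ p = s ^ p * (sin ψ) ^ p`, which contributes the
remaining factor `s ^ p`.
-/

section CapIntegral

open Set MeasureTheory

variable {s ψ : ℝ}

lemma mul_sin_mem_Icc (hs : 0 ≤ s) (hψ : ψ ∈ Icc 0 π) : s * sin ψ ∈ Icc 0 s :=
  ⟨mul_nonneg hs (sin_nonneg_of_mem_Icc hψ), mul_le_of_le_one_right hs (sin_le_one ψ)⟩

lemma abs_mul_sin_lt_one (hs : |s| ≤ 1) (hψ : ψ ∈ Ioo (-(π / 2)) (π / 2)) : |s * sin ψ| < 1 := by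
  have abs_sin_lt_one : |sin ψ| < 1 := by
    rw [← sq_lt_one_iff_abs_lt_one, sin_sq]
    exact sub_lt_self 1 (pow_pos (cos_pos_of_mem_Ioo hψ) 2)
  rw [abs_mul]
  exact (mul_le_of_le_one_left (abs_nonneg _) hs).trans_lt abs_sin_lt_one

lemma hasDerivAt_arcsin_mul_sin (h : |s * sin ψ| < 1) :
    HasDerivAt (fun x ↦ arcsin (s * sin x)) (s * (cos ψ / √(1 - (s * sin ψ) ^ 2))) ψ := by
  have ⟨neg_one_lt, lt_one⟩ := abs_lt.1 h
  convert! (hasDerivAt_arcsin neg_one_lt.ne' lt_one.ne).comp ψ ((hasDerivAt_sin ψ).const_mul s)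
    using 1
  ring

lemma cos_div_sqrt_one_sub_mul_sin_sq_le_one (hs : |s| ≤ 1) (ψ : ℝ) :
    cos ψ / √(1 - (s * sin ψ) ^ 2) ≤ 1 := by
  have mul_sin_sq_le : (s * sin ψ) ^ 2 ≤ sin ψ ^ 2 := by
    rw [mul_pow]
    exact mul_le_of_le_one_left (sq_nonneg _) ((sq_le_one_iff_abs_le_one s).2 hs)
  refine div_le_one_of_le₀ ?_ (sqrt_nonneg _)
  calc cos ψ ≤ |cos ψ| := le_abs_self _
    _ = √(1 - sin ψ ^ 2) := abs_cos_eq_sqrt_one_sub_sin_sq ψ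
    _ ≤ √(1 - (s * sin ψ) ^ 2) := by gcongr

variable {E : Type*} [NormedAddCommGroup E] [NormedSpace ℝ E]

theorem integral_comp_sin_eq_integral_comp_mul_sin (hs₀ : 0 ≤ s) (hs₁ : s ≤ 1) (g : ℝ → E) :
    ∫ φ in 0..arcsin s, g (sin φ) =
      ∫ ψ in 0..π / 2, (s * (cos ψ / √(1 - (s * sin ψ) ^ 2))) • g (s * sin ψ) := by
  have hs : |s| ≤ 1 := (abs_of_nonneg hs₀).trans_le hs₁
  have half_pi_nonneg : 0 ≤ π / 2 := by positivity
  have abs_lt_one {ψ : ℝ} (hψ : ψ ∈ Ioo 0 (π / 2)) : |s * sin ψ| < 1 :=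
    abs_mul_sin_lt_one hs ⟨by linarith [hψ.1], hψ.2⟩
  have deriv_nonneg {ψ : ℝ} (hψ : ψ ∈ Ioo 0 (π / 2)) :
      0 ≤ s * (cos ψ / √(1 - (s * sin ψ) ^ 2)) := by
    have cos_nonneg : 0 ≤ cos ψ := cos_nonneg_of_mem_Icc ⟨by linarith [hψ.1], hψ.2.le⟩
    positivity
  have Ioo_eq : Ioo (min 0 (π / 2)) (max 0 (π / 2)) = Ioo 0 (π / 2) := uIoo_of_le half_pi_nonneg
  calc ∫ φ in 0..arcsin s, g (sin φ)
      = ∫ φ in arcsin (s * sin 0)..arcsin (s * sin (π / 2)), g (sin φ) := by simp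
    _ = ∫ ψ in 0..π / 2,
          (s * (cos ψ / √(1 - (s * sin ψ) ^ 2))) • g (sin (arcsin (s * sin ψ))) :=
        (integral_deriv_smul_comp_of_deriv_nonneg (f := fun ψ ↦ arcsin (s * sin ψ))
          (g := fun φ ↦ g (sin φ)) (by fun_prop)
          (fun ψ hψ ↦ hasDerivAt_arcsin_mul_sin (abs_lt_one (Ioo_eq ▸ hψ)))
          (fun ψ hψ ↦ deriv_nonneg (Ioo_eq ▸ hψ))).symm
    _ = ∫ ψ in 0..π / 2, (s * (cos ψ / √(1 - (s * sin ψ) ^ 2))) • g (s * sin ψ) :=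
        integral_congr_Ioo_of_le half_pi_nonneg fun ψ hψ ↦ by
          have ⟨neg_one_lt, lt_one⟩ := abs_lt.1 (abs_lt_one hψ)
          simp only [sin_arcsin neg_one_lt.le lt_one.le]

theorem integral_comp_sin_le_mul_integral_comp_mul_sin {g : ℝ → ℝ} (hs₀ : 0 ≤ s) (hs₁ : s ≤ 1)
    (hg : ∀ x ∈ Icc 0 s, 0 ≤ g x)
    (hgi : IntervalIntegrable (fun ψ ↦ g (s * sin ψ)) volume 0 (π / 2)) :
    ∫ φ in 0..arcsin s, g (sin φ) ≤ s * ∫ ψ in 0..π / 2, g (s * sin ψ) := by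
  have hs : |s| ≤ 1 := (abs_of_nonneg hs₀).trans_le hs₁
  have half_pi_nonneg : 0 ≤ π / 2 := by positivity
  have g_nonneg {ψ : ℝ} (hψ : ψ ∈ Ioc 0 (π / 2)) : 0 ≤ g (s * sin ψ) :=
    hg _ (mul_sin_mem_Icc hs₀ ⟨hψ.1.le, by linarith [hψ.2]⟩)
  rw [integral_comp_sin_eq_integral_comp_mul_sin hs₀ hs₁, ← intervalIntegral.integral_const_mul,
    integral_of_le half_pi_nonneg, integral_of_le half_pi_nonneg]
  refine integral_mono_of_nonneg ?_ (hgi.const_mul s).1 ?_ <;>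
    refine ae_restrict_of_forall_mem measurableSet_Ioc fun ψ hψ ↦ ?_
  · have cos_nonneg : 0 ≤ cos ψ := cos_nonneg_of_mem_Icc ⟨by linarith [hψ.1], hψ.2⟩
    exact mul_nonneg (by positivity) (g_nonneg hψ)
  · exact mul_le_mul_of_nonneg_right
      (mul_le_of_le_one_right hs₀ (cos_div_sqrt_one_sub_mul_sin_sq_le_one hs ψ)) (g_nonneg hψ)

lemma sinc_pos_of_nonneg_of_lt_pi {x : ℝ} (hx₀ : 0 ≤ x) (hxπ : x < π) : 0 < sinc x := by
  rcases hx₀.eq_or_lt with rfl | hx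
  · simp
  · rw [sinc_of_ne_zero hx.ne']
    exact div_pos (sin_pos_of_pos_of_lt_pi hx hxπ) hx

-- Factoring `sin x ^ p = sinc x ^ p * x ^ p` moves the singularity at `0` to the power of `x`.
lemma intervalIntegrable_sin_rpow {p b : ℝ} (hp : -1 < p) (hb₀ : 0 ≤ b) (hbπ : b < π) :
    IntervalIntegrable (fun x ↦ sin x ^ p) volume 0 b := by
  have sinc_pos_of_mem {x : ℝ} (hx : x ∈ Icc 0 b) : 0 < sinc x :=
    sinc_pos_of_nonneg_of_lt_pi hx.1 (hx.2.trans_lt hbπ)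
  have continuousOn_sinc_rpow : ContinuousOn (fun x ↦ sinc x ^ p) (uIcc 0 b) := by
    rw [uIcc_of_le hb₀]
    exact continuous_sinc.continuousOn.rpow_const fun x hx ↦ .inl (sinc_pos_of_mem hx).ne'
  refine ((intervalIntegrable_rpow' hp).continuousOn_mul continuousOn_sinc_rpow).congr_uIoo ?_
  rw [uIoo_of_le hb₀]
  intro x hx
  dsimp only
  rw [← mul_rpow (sinc_pos_of_mem (Ioo_subset_Icc_self hx)).le hx.1.le,
    sinc_of_ne_zero hx.1.ne', div_mul_cancel₀ _ hx.1.ne']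

theorem cap_le_half_sphere_general {p θ : ℝ} (hp : -1 < p) (hθ0 : 0 ≤ θ) (hθ1 : θ ≤ π / 2) :
    ∫ φ in 0..θ, sin φ ^ p ≤ sin θ ^ (p + 1) * ∫ ψ in 0..π / 2, sin ψ ^ p := by
  have half_pi_nonneg : 0 ≤ π / 2 := by positivity
  have sin_nonneg : 0 ≤ sin θ := sin_nonneg_of_nonneg_of_le_pi hθ0 (by linarith)
  have mul_sin_rpow : EqOn (fun ψ ↦ (sin θ * sin ψ) ^ p) (fun ψ ↦ sin θ ^ p * sin ψ ^ p)
      (uIoo 0 (π / 2)) := by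
    rw [uIoo_of_le half_pi_nonneg]
    exact fun ψ hψ ↦ mul_rpow sin_nonneg
      (sin_nonneg_of_nonneg_of_le_pi hψ.1.le (by linarith [hψ.2]))
  have integrable : IntervalIntegrable (fun ψ ↦ (sin θ * sin ψ) ^ p) volume 0 (π / 2) :=
    ((intervalIntegrable_sin_rpow hp half_pi_nonneg (by linarith [pi_pos])).const_mul _).congr_uIoo
      mul_sin_rpow.symm
  calc ∫ φ in 0..θ, sin φ ^ p
      = ∫ φ in 0..arcsin (sin θ), sin φ ^ p := by rw [arcsin_sin (by linarith) hθ1]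
    _ ≤ sin θ * ∫ ψ in 0..π / 2, (sin θ * sin ψ) ^ p :=
        integral_comp_sin_le_mul_integral_comp_mul_sin (g := fun x ↦ x ^ p) sin_nonneg
          (sin_le_one θ) (fun x hx ↦ rpow_nonneg hx.1 p) integrable
    _ = sin θ ^ (p + 1) * ∫ ψ in 0..π / 2, sin ψ ^ p := by
        rw [integral_congr_uIoo mul_sin_rpow, intervalIntegral.integral_const_mul,
          rpow_add_one' sin_nonneg (by linarith)]
        ring

end CapIntegral

/-- The spherical-cap area inequality `A_d(r,θ) ≤ (1/2) S_d(r sin θ)`, stated for the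
defining integrals: for `d ≥ 2` and `0 ≤ θ ≤ π/2`,
`∫₀^θ sin^{d-2} φ dφ ≤ (sin θ)^{d-1} ∫₀^{π/2} sin^{d-2} ψ dψ`. -/
theorem cap_le_half_sphere (d : ℕ) (hd : 2 ≤ d) (θ : ℝ)
    (hθ0 : 0 ≤ θ) (hθ1 : θ ≤ π / 2) :
    (∫ φ in (0 : ℝ)..θ, Real.sin φ ^ (d - 2)) ≤
      Real.sin θ ^ (d - 1) * ∫ ψ in (0 : ℝ)..(π / 2), Real.sin ψ ^ (d - 2) := by
  obtain ⟨n, rfl⟩ := Nat.exists_eq_add_of_le' hd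
  exact_mod_cast cap_le_half_sphere_general (p := n) (by linarith [n.cast_nonneg (α := ℝ)]) hθ0 hθ1
end

section
/- Let α ≥ 1 be real and let s satisfy −1 < s ≤ −(2α+3)/(2α+5). Let k ∈ ℕ and let f₀, f₁, …, f_k be reals with f₀ > 0 and f_i ≥ 0 for i = 1, …, k, and suppose the polynomial f(t) = Σ_{i=0}^k f_i · P_i^{(α,−1/2)}(t) satisfies f(t) ≤ 0 for all t ∈ [−1, s]. Then f(1)/f₀ ≥ 1 − 1/P̃₁^{(α,−1/2)}(s). -/
open Finset

/-- The generalized binomial coefficient `binom(a, k) = a(a-1)⋯(a-k+1)/k!` for real `a`. -/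
noncomputable def genBinom (a : ℝ) (k : ℕ) : ℝ :=
  (∏ i ∈ Finset.range k, (a - i)) / (Nat.factorial k)

/-- The Jacobi polynomial
`P_n^{(α,β)}(x) = Σ_{s=0}^n binom(n+α, n-s)·binom(n+β, s)·((x-1)/2)^s·((x+1)/2)^{n-s}`. -/
noncomputable def jacobiP (n : ℕ) (α β x : ℝ) : ℝ :=
  ∑ s ∈ Finset.range (n + 1),
    genBinom (n + α) (n - s) * genBinom (n + β) s * ((x - 1) / 2) ^ s * ((x + 1) / 2) ^ (n - s)

/-- The normalized Jacobi polynomial `P̃_n^{(α,β)}(x) = P_n^{(α,β)}(x) / P_n^{(α,β)}(1)`. -/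
noncomputable def jacobiPt (n : ℕ) (α β x : ℝ) : ℝ :=
  jacobiP n α β x / jacobiP n α β 1

/-!
The bound follows by evaluating the feasible polynomial at the single point `s`, once it is known
that `P̃₁(s) ≤ P̃ₙ(s)` for all `n ≥ 1`. The threshold `-(2α+3)/(2α+5)` is the point other than `1`
where `P̃₂ = P̃₁`, so the comparison is sharp at `n = 2`; `n = 3` is a similar computation.

For `n ≥ 4` put `z = (x + 1)/2` and `p(z) = Pₙ(x)`. Multiplying the Jacobi equation by `p'` shows
that, when `β ≥ -1/2`, the Sonine function `ν p² + z(1 - z) p'²` becomes nonincreasing after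
multiplication by `(1 - z)^(2(α+β+1))`. Hence `|P̃ₙ(x)| ≤ (1 - z)^(-(α+β+1)) |P̃ₙ(-1)|`. The last
factor decreases in `n`, and for `n = 4` this bound is already below `-P̃₁(s)` throughout the range
of `s`, by Bernoulli's inequality.
-/

section GeneralizedBinomial

lemma genBinom_zero_right (a : ℝ) : genBinom a 0 = 1 := by
  simp [genBinom]

lemma genBinom_succ_right (a : ℝ) (k : ℕ) :
    genBinom a (k + 1) = (a - k) / (k + 1) * genBinom a k := by
  have hk : (k : ℝ) + 1 ≠ 0 := k.cast_add_one_ne_zero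
  simp only [genBinom, prod_range_succ, Nat.factorial_succ, Nat.cast_mul, Nat.cast_add,
    Nat.cast_one]
  field_simp

lemma genBinom_one_right (a : ℝ) : genBinom a 1 = a := by
  simp [genBinom]

lemma genBinom_two_right (a : ℝ) : genBinom a 2 = a * (a - 1) / 2 := by
  rw [genBinom_succ_right, genBinom_one_right]
  norm_num
  ring

lemma genBinom_three_right (a : ℝ) : genBinom a 3 = a * (a - 1) * (a - 2) / 6 := by
  rw [genBinom_succ_right, genBinom_two_right]
  norm_num
  ring

lemma genBinom_four_right (a : ℝ) :
    genBinom a 4 = a * (a - 1) * (a - 2) * (a - 3) / 24 := by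
  rw [genBinom_succ_right, genBinom_three_right]
  norm_num
  ring

lemma genBinom_add_one_succ (a : ℝ) (k : ℕ) :
    genBinom (a + 1) (k + 1) = (a + 1) / (k + 1) * genBinom a k := by
  have hk : (k : ℝ) + 1 ≠ 0 := k.cast_add_one_ne_zero
  simp only [genBinom, prod_range_succ', Nat.factorial_succ, Nat.cast_mul, Nat.cast_add,
    Nat.cast_one, Nat.cast_zero, add_sub_add_right_eq_sub, sub_zero]
  field_simp

lemma genBinom_pos {a : ℝ} {k : ℕ} (h : k - 1 < a) : 0 < genBinom a k := by
  refine div_pos (prod_pos fun i hi => ?_) (by positivity)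
  have hik : (i : ℝ) + 1 ≤ k := by exact_mod_cast mem_range.1 hi
  linarith

lemma antitone_genBinom_div {α β : ℝ} (hβ : -1 < β) (hβα : β ≤ α) :
    Antitone fun n : ℕ => genBinom (n + β) n / genBinom (n + α) n := by
  refine antitone_nat_of_succ_le fun n => ?_
  have hnβ : 0 < genBinom (n + β) n := genBinom_pos (by linarith)
  have hnα : 0 < genBinom (n + α) n := genBinom_pos (by linarith)
  have : (0 : ℝ) ≤ n := n.cast_nonneg
  have hstep : ∀ γ : ℝ, genBinom ((n + 1 : ℕ) + γ) (n + 1) =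
      (n + γ + 1) / (n + 1) * genBinom (n + γ) n := fun γ => by
    rw [← genBinom_add_one_succ]
    push_cast
    ring_nf
  calc genBinom ((n + 1 : ℕ) + β) (n + 1) / genBinom ((n + 1 : ℕ) + α) (n + 1)
      = (n + β + 1) / (n + α + 1) * (genBinom (n + β) n / genBinom (n + α) n) := by
        rw [hstep, hstep]
        have : (n : ℝ) + α + 1 ≠ 0 := by linarith
        field_simp
    _ ≤ genBinom (n + β) n / genBinom (n + α) n :=
        mul_le_of_le_one_left (by positivity) ((div_le_one (by linarith)).2 (by linarith))

end GeneralizedBinomial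

section SpecialValues

lemma jacobiP_zero (α β x : ℝ) : jacobiP 0 α β x = 1 := by
  simp [jacobiP, genBinom_zero_right]

lemma jacobiP_apply_one (n : ℕ) (α β : ℝ) : jacobiP n α β 1 = genBinom (n + α) n := by
  rw [jacobiP, sum_eq_single 0 (fun s _ hs => by simp [hs]) (by simp)]
  simp [genBinom_zero_right]

lemma jacobiP_apply_neg_one (n : ℕ) (α β : ℝ) :
    jacobiP n α β (-1) = (-1) ^ n * genBinom (n + β) n := by
  rw [jacobiP, sum_eq_single n]
  · norm_num [genBinom_zero_right, mul_comm]
  · intro s hs hsn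
    have : n - s ≠ 0 := by grind
    simp [this]
  · simp

lemma jacobiP_apply_one_pos {α : ℝ} (hα : -1 < α) (n : ℕ) (β : ℝ) : 0 < jacobiP n α β 1 := by
  rw [jacobiP_apply_one]
  exact genBinom_pos (by linarith)

lemma abs_jacobiPt_apply_neg_one {α β : ℝ} (hα : -1 < α) (hβ : -1 < β) (n : ℕ) :
    |jacobiPt n α β (-1)| = genBinom (n + β) n / genBinom (n + α) n := by
  rw [jacobiPt, jacobiP_apply_neg_one, jacobiP_apply_one, abs_div, abs_mul, abs_neg_one_pow,
    one_mul, abs_of_pos (genBinom_pos (by linarith)), abs_of_pos (genBinom_pos (by linarith))]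

end SpecialValues

section DifferentialEquation

open Polynomial

/-- The Jacobi polynomial as an element of `ℝ[X]`, in the variable `z = (x + 1) / 2`, which moves
the interval `[-1, 1]` to `[0, 1]`. -/
noncomputable def shiftedJacobi (n : ℕ) (α β : ℝ) : ℝ[X] :=
  ∑ s ∈ Finset.range (n + 1),
    (genBinom (n + α) (n - s) * genBinom (n + β) s) • ((X - 1) ^ s * X ^ (n - s))

lemma eval_shiftedJacobi (n : ℕ) (α β z : ℝ) :
    (shiftedJacobi n α β).eval z = jacobiP n α β (2 * z - 1) := by
  have hsub : (2 * z - 1 - 1) / 2 = z - 1 := by ring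
  simp [shiftedJacobi, jacobiP, eval_finsetSum, hsub, mul_assoc]

/-- The differential operator `p ↦ z(1 - z) p'' + ((β + 1) - (α + β + 2) z) p'`, of which the
shifted Jacobi polynomials are the eigenvectors. -/
noncomputable def jacobiOperator (α β : ℝ) : ℝ[X] →ₗ[ℝ] ℝ[X] :=
  LinearMap.mulLeft ℝ (X * (1 - X)) ∘ₗ derivative ∘ₗ derivative +
    LinearMap.mulLeft ℝ (C (β + 1) - C (α + β + 2) * X) ∘ₗ derivative

lemma jacobiOperator_apply (α β : ℝ) (p : ℝ[X]) :
    jacobiOperator α β p = X * (1 - X) * derivative (derivative p) +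
      (C (β + 1) - C (α + β + 2) * X) * derivative p := rfl

-- At `s = 0` and at `m = 0` the coefficient of the term with a truncated exponent vanishes.
lemma jacobiOperator_sub_one_pow_mul_X_pow (α β : ℝ) (s m : ℕ) :
    jacobiOperator α β ((X - 1) ^ s * X ^ m) +
        ((s + m) * (s + m + α + β + 1) : ℝ) • ((X - 1) ^ s * X ^ m) =
      (s * (s + α) : ℝ) • ((X - 1) ^ s * X ^ m - (X - 1) ^ (s - 1) * X ^ (m + 1)) +
      (m * (m + β) : ℝ) • ((X - 1) ^ s * X ^ m - (X - 1) ^ (s + 1) * X ^ (m - 1)) := by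
  have hderiv : ∀ k : ℕ, derivative ((X - 1 : ℝ[X]) ^ k) = C (k : ℝ) * (X - 1) ^ (k - 1) :=
    fun k => by simp [derivative_pow]
  simp only [jacobiOperator_apply, smul_eq_C_mul, derivative_mul, derivative_add, derivative_C,
    hderiv, derivative_X_pow]
  rcases s with _ | _ | s <;> rcases m with _ | _ | m <;>
    simp only [map_add, map_mul, map_one, map_zero, map_natCast, map_ofNat, Nat.cast_add,
      Nat.cast_zero, Nat.cast_one, Nat.add_sub_cancel, Nat.zero_sub, Nat.sub_self, zero_add] <;>
    ring

lemma genBinom_mul_genBinom_succ (α β : ℝ) {n s : ℕ} (hs : s < n) :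
    genBinom (n + α) (n - (s + 1)) * genBinom (n + β) (s + 1) *
        ((s + 1 : ℕ) * ((s + 1 : ℕ) + α)) =
      genBinom (n + α) (n - s) * genBinom (n + β) s *
        ((n - s : ℕ) * ((n - s : ℕ) + β)) := by
  obtain ⟨m, rfl⟩ := Nat.exists_eq_add_of_le' hs
  have hm₁ : m + (s + 1) - s = m + 1 := by omega
  have hs' : (s : ℝ) + 1 ≠ 0 := s.cast_add_one_ne_zero
  have hm' : (m : ℝ) + 1 ≠ 0 := m.cast_add_one_ne_zero
  rw [hm₁, Nat.add_sub_cancel, genBinom_succ_right, genBinom_succ_right]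
  push_cast
  field_simp
  ring

theorem jacobiOperator_shiftedJacobi (n : ℕ) (α β : ℝ) :
    jacobiOperator α β (shiftedJacobi n α β) +
      (n * (n + α + β + 1) : ℝ) • shiftedJacobi n α β = 0 := by
  let c : ℕ → ℝ := fun s => genBinom (n + α) (n - s) * genBinom (n + β) s
  let w : ℕ → ℕ → ℝ[X] := fun s m => (X - 1) ^ s * X ^ m
  let lower : ℕ → ℝ[X] := fun s =>
    (c s * (s * (s + α))) • (w s (n - s) - w (s - 1) (n - s + 1))
  let upper : ℕ → ℝ[X] := fun s =>
    (c s * ((n - s : ℕ) * ((n - s : ℕ) + β))) • (w s (n - s) - w (s + 1) (n - s - 1))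
  have hterm : ∀ s ∈ Finset.range (n + 1), jacobiOperator α β (c s • w s (n - s)) +
      (n * (n + α + β + 1) : ℝ) • c s • w s (n - s) = lower s + upper s := fun s hs => by
    have hn : (s : ℝ) + (n - s : ℕ) = n := by
      exact_mod_cast Nat.add_sub_cancel' (Nat.lt_succ_iff.1 (Finset.mem_range.1 hs))
    have h := jacobiOperator_sub_one_pow_mul_X_pow α β s (n - s)
    rw [hn] at h
    rw [map_smul, smul_comm _ (c s), ← smul_add, h, smul_add, smul_smul, smul_smul]
  have hcancel : ∀ s ∈ Finset.range n, lower (s + 1) + upper s = 0 := fun s hs => by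
    have hsn : s < n := Finset.mem_range.1 hs
    have hsub : n - (s + 1) + 1 = n - s := by omega
    simp only [lower, upper, c, genBinom_mul_genBinom_succ α β hsn, Nat.add_sub_cancel, hsub,
      Nat.sub_sub]
    rw [← smul_add, sub_add_sub_cancel', sub_self, smul_zero]
  calc jacobiOperator α β (shiftedJacobi n α β) +
        (n * (n + α + β + 1) : ℝ) • shiftedJacobi n α β
      = ∑ s ∈ Finset.range (n + 1), (lower s + upper s) := by
        rw [shiftedJacobi, map_sum, Finset.smul_sum, ← Finset.sum_add_distrib]
        exact Finset.sum_congr rfl hterm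
    _ = ∑ s ∈ Finset.range n, (lower (s + 1) + upper s) := by
        rw [Finset.sum_add_distrib, Finset.sum_range_succ', Finset.sum_range_succ upper,
          Finset.sum_add_distrib]
        simp [lower, upper]
    _ = 0 := Finset.sum_eq_zero hcancel

end DifferentialEquation

section SonineEstimate

open Polynomial

/-- Sonine's energy function `ν p² + z(1 - z) p'²` for a solution `p` of the Jacobi equation with
eigenvalue `ν`; it dominates `ν p²` on `[0, 1]` and equals it at `0`. -/
noncomputable def sonine (ν : ℝ) (p : ℝ[X]) (z : ℝ) : ℝ :=
  ν * p.eval z ^ 2 + z * (1 - z) * (derivative p).eval z ^ 2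

lemma sonine_zero (ν : ℝ) (p : ℝ[X]) : sonine ν p 0 = ν * p.eval 0 ^ 2 := by
  simp [sonine]

variable {α β ν z : ℝ} {p : ℝ[X]}

lemma mul_sq_eval_le_sonine (hz : z ∈ Set.Icc 0 1) : ν * p.eval z ^ 2 ≤ sonine ν p z := by
  have : 0 ≤ 1 - z := sub_nonneg.2 hz.2
  exact le_add_of_nonneg_right (mul_nonneg (mul_nonneg hz.1 this) (sq_nonneg _))

lemma hasDerivAt_sonine (hp : jacobiOperator α β p + ν • p = 0) (z : ℝ) :
    HasDerivAt (sonine ν p)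
      ((2 * (α + β + 1) * z - (2 * β + 1)) * (derivative p).eval z ^ 2) z := by
  have hode : z * (1 - z) * (derivative (derivative p)).eval z +
      (β + 1 - (α + β + 2) * z) * (derivative p).eval z + ν * p.eval z = 0 := by
    simpa [jacobiOperator_apply] using congrArg (eval z) hp
  have hquad : HasDerivAt (fun x : ℝ => x * (1 - x)) (1 * (1 - z) + z * -1) z :=
    (hasDerivAt_id' z).mul ((hasDerivAt_id' z).const_sub 1)
  refine ((((p.hasDerivAt z).pow 2).const_mul ν).add
    (hquad.mul (((derivative p).hasDerivAt z).pow 2))).congr_deriv ?_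
  simp only [Pi.pow_apply, Nat.cast_ofNat, Nat.add_one_sub_one, pow_one]
  linear_combination 2 * (derivative p).eval z * hode

theorem antitoneOn_rpow_mul_sonine (hβ : -1 / 2 ≤ β) (hαβ : 0 ≤ α + β + 1) (hν : 0 ≤ ν)
    (hp : jacobiOperator α β p + ν • p = 0) :
    AntitoneOn (fun z => (1 - z) ^ (2 * (α + β + 1)) * sonine ν p z) (Set.Icc 0 1) := by
  set μ := 2 * (α + β + 1) with hμ
  have hderiv : ∀ z ∈ Set.Ioo (0 : ℝ) 1, HasDerivAt (fun z => (1 - z) ^ μ * sonine ν p z)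
      (-(1 - z) ^ (μ - 1) *
        ((2 * β + 1) * (1 - z) * (derivative p).eval z ^ 2 + μ * (ν * p.eval z ^ 2))) z := by
    intro z hz
    have hz1 : 1 - z ≠ 0 := (sub_pos.2 hz.2).ne'
    refine ((((hasDerivAt_id' z).const_sub 1).rpow_const (p := μ) (Or.inl hz1)).mul
      (hasDerivAt_sonine hp z)).congr_deriv ?_
    have hrpow : (1 - z) ^ μ = (1 - z) ^ (μ - 1) * (1 - z) := by
      rw [Real.rpow_sub_one hz1, div_mul_cancel₀ _ hz1]
    rw [hrpow, ← hμ, sonine]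
    ring
  refine antitoneOn_of_deriv_nonpos (convex_Icc 0 1) ?_ ?_ ?_
  · refine ((continuousOn_const.sub continuousOn_id).rpow_const fun z _ => Or.inr ?_).mul
      fun z _ => (hasDerivAt_sonine hp z).continuousAt.continuousWithinAt
    linarith
  · rw [interior_Icc]
    exact fun z hz => (hderiv z hz).differentiableAt.differentiableWithinAt
  · rw [interior_Icc]
    intro z hz
    have hz1 : 0 < 1 - z := sub_pos.2 hz.2
    have hβ' : 0 ≤ 2 * β + 1 := by linarith
    have : 0 ≤ μ := by linarith
    rw [(hderiv z hz).deriv]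
    exact mul_nonpos_of_nonpos_of_nonneg (neg_nonpos.2 (by positivity)) (by positivity)

theorem abs_jacobiP_mul_rpow_le (hβ : -1 / 2 ≤ β) (hαβ : 0 ≤ α + β + 1) (hz : z ∈ Set.Icc 0 1)
    (n : ℕ) : |jacobiP n α β (2 * z - 1)| * (1 - z) ^ (α + β + 1) ≤ |jacobiP n α β (-1)| := by
  have hz1 : 0 ≤ 1 - z := sub_nonneg.2 hz.2
  rcases n.eq_zero_or_pos with rfl | hn
  · simpa [jacobiP_zero] using Real.rpow_le_one hz1 (by linarith [hz.1]) hαβ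
  set p := shiftedJacobi n α β
  have hn' : (1 : ℝ) ≤ n := by exact_mod_cast hn
  have hν : (0 : ℝ) < n * (n + α + β + 1) := mul_pos (by linarith) (by linarith)
  set ν : ℝ := n * (n + α + β + 1)
  have hrpow : (1 - z) ^ (2 * (α + β + 1)) = ((1 - z) ^ (α + β + 1)) ^ 2 := by
    rw [← Real.rpow_mul_natCast hz1, mul_comm, Nat.cast_ofNat]
  have henergy : ν * (p.eval z * (1 - z) ^ (α + β + 1)) ^ 2 ≤ ν * p.eval 0 ^ 2 := by
    calc ν * (p.eval z * (1 - z) ^ (α + β + 1)) ^ 2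
        = (1 - z) ^ (2 * (α + β + 1)) * (ν * p.eval z ^ 2) := by rw [hrpow]; ring
      _ ≤ (1 - z) ^ (2 * (α + β + 1)) * sonine ν p z :=
          mul_le_mul_of_nonneg_left (mul_sq_eval_le_sonine hz) (Real.rpow_nonneg hz1 _)
      _ ≤ (1 - 0) ^ (2 * (α + β + 1)) * sonine ν p 0 :=
          antitoneOn_rpow_mul_sonine hβ hαβ hν.le (jacobiOperator_shiftedJacobi n α β)
            (Set.left_mem_Icc.2 zero_le_one) hz hz.1
      _ = ν * p.eval 0 ^ 2 := by rw [sub_zero, Real.one_rpow, one_mul, sonine_zero]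
  have habs := sq_le_sq.1 (le_of_mul_le_mul_left henergy hν)
  rwa [abs_mul, abs_of_nonneg (Real.rpow_nonneg hz1 _), eval_shiftedJacobi, eval_shiftedJacobi,
    mul_zero, zero_sub] at habs

lemma abs_jacobiPt_mul_rpow_le (hβ : -1 / 2 ≤ β) (hαβ : 0 ≤ α + β + 1) (hz : z ∈ Set.Icc 0 1)
    (n : ℕ) : |jacobiPt n α β (2 * z - 1)| * (1 - z) ^ (α + β + 1) ≤ |jacobiPt n α β (-1)| := by
  rw [jacobiPt, jacobiPt, abs_div, abs_div, div_mul_eq_mul_div]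
  exact div_le_div_of_nonneg_right (abs_jacobiP_mul_rpow_le hβ hαβ hz n) (abs_nonneg _)

end SonineEstimate

section Comparison

variable {α z : ℝ}

lemma jacobiPt_one_eq (hα : -1 < α) (z : ℝ) :
    jacobiPt 1 α (-1 / 2) (2 * z - 1) = ((2 * α + 3) * z - 1) / (2 * (α + 1)) := by
  have h₁ : α + 1 ≠ 0 := by linarith
  have hP : jacobiP 1 α (-1 / 2) (2 * z - 1) = ((2 * α + 3) * z - 1) / 2 := by
    simp only [jacobiP, sum_range_succ, sum_range_zero, genBinom_zero_right, genBinom_one_right,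
      Nat.sub_zero, Nat.sub_self, Nat.cast_one]
    ring
  rw [jacobiPt, jacobiP_apply_one, Nat.cast_one, genBinom_one_right, hP, add_comm 1 α]
  field_simp

lemma jacobiPt_two_sub_jacobiPt_one (hα : -1 < α) (z : ℝ) :
    jacobiPt 2 α (-1 / 2) (2 * z - 1) - jacobiPt 1 α (-1 / 2) (2 * z - 1) =
      (2 * α + 7) * (1 - z) * (1 - (2 * α + 5) * z) / (4 * (α + 1) * (α + 2)) := by
  have h₁ : α + 1 ≠ 0 := by linarith
  have h₂ : α + 2 ≠ 0 := by linarith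
  have hone : genBinom (2 + α) 2 = (α + 1) * (α + 2) / 2 := by
    rw [genBinom_two_right]
    ring
  have hP : jacobiP 2 α (-1 / 2) (2 * z - 1) =
      ((2 * α + 5) * (2 * α + 7) * z ^ 2 - 6 * (2 * α + 5) * z + 3) / 8 := by
    simp only [jacobiP, sum_range_succ, sum_range_zero, genBinom_zero_right, genBinom_one_right,
      genBinom_two_right, Nat.reduceSub, Nat.cast_ofNat]
    ring
  rw [jacobiPt_one_eq hα, jacobiPt, jacobiP_apply_one, Nat.cast_ofNat, hone, hP]
  field_simp
  ring

lemma jacobiPt_three_sub_jacobiPt_one (hα : -1 < α) (z : ℝ) :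
    jacobiPt 3 α (-1 / 2) (2 * z - 1) - jacobiPt 1 α (-1 / 2) (2 * z - 1) =
      (2 * α + 9) * (1 - z) *
        ((2 * α + 1) - (2 * α - 4) * (2 * α + 7) * z - (2 * α + 7) * (2 * α + 11) * z ^ 2) /
        (8 * (α + 1) * (α + 2) * (α + 3)) := by
  have h₁ : α + 1 ≠ 0 := by linarith
  have h₂ : α + 2 ≠ 0 := by linarith
  have h₃ : α + 3 ≠ 0 := by linarith
  have hone : genBinom (3 + α) 3 = (α + 1) * (α + 2) * (α + 3) / 6 := by
    rw [genBinom_three_right]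
    ring
  have hP : jacobiP 3 α (-1 / 2) (2 * z - 1) =
      ((2 * α + 7) * (2 * α + 9) * (2 * α + 11) * z ^ 3 -
        15 * (2 * α + 7) * (2 * α + 9) * z ^ 2 + 45 * (2 * α + 7) * z - 15) / 48 := by
    simp only [jacobiP, sum_range_succ, sum_range_zero, genBinom_zero_right, genBinom_one_right,
      genBinom_two_right, genBinom_three_right, Nat.reduceSub, Nat.cast_ofNat]
    ring
  rw [jacobiPt_one_eq hα, jacobiPt, jacobiP_apply_one, Nat.cast_ofNat, hone, hP]
  field_simp
  ring

lemma jacobiPt_one_le_jacobiPt_two (hα : -1 < α) (hz : (2 * α + 5) * z ≤ 1) :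
    jacobiPt 1 α (-1 / 2) (2 * z - 1) ≤ jacobiPt 2 α (-1 / 2) (2 * z - 1) := by
  rw [← sub_nonneg, jacobiPt_two_sub_jacobiPt_one hα]
  have h₁ : 0 < α + 1 := by linarith
  have h₂ : 0 < α + 2 := by linarith
  have hz1 : z ≤ 1 := by nlinarith
  exact div_nonneg (mul_nonneg (mul_nonneg (by linarith) (by linarith)) (by linarith))
    (by positivity)

lemma jacobiPt_one_le_jacobiPt_three (hα : -1 / 2 ≤ α) (hz0 : 0 ≤ z)
    (hz : (2 * α + 5) * z ≤ 1) :
    jacobiPt 1 α (-1 / 2) (2 * z - 1) ≤ jacobiPt 3 α (-1 / 2) (2 * z - 1) := by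
  have hα1 : 0 ≤ 2 * α + 1 := by linarith
  have h₁ : 0 < α + 1 := by linarith
  have h₂ : 0 < α + 2 := by linarith
  have h₃ : 0 < α + 3 := by linarith
  have h₅ : 0 < 2 * α + 5 := by linarith
  have h₇ : 0 < 2 * α + 7 := by linarith
  have h₁₁ : 0 < 2 * α + 11 := by linarith
  have hz1 : 0 ≤ 1 - z := by nlinarith
  have : 0 ≤ 1 - (2 * α + 5) * z := by linarith
  have hquad : 0 ≤
      (2 * α + 1) - (2 * α - 4) * (2 * α + 7) * z - (2 * α + 7) * (2 * α + 11) * z ^ 2 := by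
    refine nonneg_of_mul_nonneg_left (b := 2 * α + 5) ?_ h₅
    calc (0 : ℝ) ≤ (2 * α + 1) * (2 * α + 5) * (1 - (2 * α + 5) * z) +
          4 * (α + 2) * (2 * α + 11) * z +
          (2 * α + 7) * (2 * α + 11) * (z * (1 - (2 * α + 5) * z)) := by positivity
      _ = _ := by ring
  rw [← sub_nonneg, jacobiPt_three_sub_jacobiPt_one (by linarith)]
  exact div_nonneg (mul_nonneg (mul_nonneg (by linarith) hz1) hquad) (by positivity)

lemma jacobiPt_one_le_neg_one_div (hα : -1 < α) (hz : (2 * α + 5) * z ≤ 1) :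
    jacobiPt 1 α (-1 / 2) (2 * z - 1) ≤ -(1 / ((α + 1) * (2 * α + 5))) := by
  have h₁ : 0 < α + 1 := by linarith
  have h₅ : 0 < 2 * α + 5 := by linarith
  rw [jacobiPt_one_eq hα, ← neg_div, div_le_div_iff₀ (by positivity) (by positivity)]
  nlinarith [mul_le_mul_of_nonneg_left hz (show 0 ≤ (2 * α + 3) * (α + 1) by nlinarith)]

lemma abs_jacobiPt_apply_neg_one_le_of_four_le (hα : -1 / 2 ≤ α) {n : ℕ} (hn : 4 ≤ n) :
    |jacobiPt n α (-1 / 2) (-1)| ≤ 105 / (16 * ((α + 1) * (α + 2) * (α + 3) * (α + 4))) := by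
  have hβ : (-1 : ℝ) < -1 / 2 := by norm_num
  have : (0 : ℝ) < (α + 1) * (α + 2) * (α + 3) * (α + 4) := by
    have h₁ : 0 < α + 1 := by linarith
    have h₂ : 0 < α + 2 := by linarith
    have h₃ : 0 < α + 3 := by linarith
    have h₄ : 0 < α + 4 := by linarith
    positivity
  rw [abs_jacobiPt_apply_neg_one (by linarith) hβ]
  refine (antitone_genBinom_div hβ hα hn).trans_eq ?_
  have hβ4 : genBinom ((4 : ℕ) + -1 / 2) 4 = 35 / 128 := by
    norm_num [genBinom_four_right]
  have hα4 : genBinom ((4 : ℕ) + α) 4 = (α + 1) * (α + 2) * (α + 3) * (α + 4) / 24 := by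
    rw [genBinom_four_right, Nat.cast_ofNat]
    ring
  simp only [hβ4, hα4]
  field_simp
  norm_num

lemma div_le_one_sub_rpow (hα : 1 / 2 ≤ α) (hz0 : 0 ≤ z) (hz : (2 * α + 5) * z ≤ 1) :
    (2 * α + 9) / (2 * (2 * α + 5)) ≤ (1 - z) ^ (α + 1 / 2) := by
  have hbernoulli := one_add_mul_self_le_rpow_one_add (s := -z) (by nlinarith)
    (show 1 ≤ α + 1 / 2 by linarith)
  rw [← sub_eq_add_neg] at hbernoulli
  refine le_trans ?_ hbernoulli
  rw [div_le_iff₀ (by linarith)]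
  nlinarith

lemma abs_jacobiPt_le_one_div (hα : 1 ≤ α) (hz0 : 0 ≤ z) (hz : (2 * α + 5) * z ≤ 1) {n : ℕ}
    (hn : 4 ≤ n) :
    |jacobiPt n α (-1 / 2) (2 * z - 1)| ≤ 1 / ((α + 1) * (2 * α + 5)) := by
  have hb : 0 < (2 * α + 9) / (2 * (2 * α + 5)) := by positivity
  have hconst : 105 / (16 * ((α + 1) * (α + 2) * (α + 3) * (α + 4))) ≤
      1 / ((α + 1) * (2 * α + 5)) * ((2 * α + 9) / (2 * (2 * α + 5))) := by
    have hpoly : 210 * (2 * α + 5) ^ 2 ≤ 16 * ((α + 2) * (α + 3) * (α + 4)) * (2 * α + 9) := by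
      obtain ⟨δ, rfl⟩ : ∃ δ, α = 1 + δ := ⟨α - 1, by ring⟩
      have hδ : 0 ≤ δ := by linarith
      rw [← sub_nonneg]
      ring_nf
      positivity
    rw [div_mul_div_comm, div_le_div_iff₀ (by positivity) (by positivity)]
    linarith [mul_le_mul_of_nonneg_left hpoly (show 0 ≤ α + 1 by linarith)]
  have hexp : α + -1 / 2 + 1 = α + 1 / 2 := by ring
  have hsonine := abs_jacobiPt_mul_rpow_le (α := α) (β := -1 / 2) (z := z) le_rfl
    (by linarith) ⟨hz0, by nlinarith⟩ n
  rw [hexp] at hsonine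
  refine le_of_mul_le_mul_right ?_ hb
  calc |jacobiPt n α (-1 / 2) (2 * z - 1)| * ((2 * α + 9) / (2 * (2 * α + 5)))
      ≤ |jacobiPt n α (-1 / 2) (2 * z - 1)| * (1 - z) ^ (α + 1 / 2) :=
        mul_le_mul_of_nonneg_left (div_le_one_sub_rpow (by linarith) hz0 hz) (abs_nonneg _)
    _ ≤ |jacobiPt n α (-1 / 2) (-1)| := hsonine
    _ ≤ 105 / (16 * ((α + 1) * (α + 2) * (α + 3) * (α + 4))) :=
        abs_jacobiPt_apply_neg_one_le_of_four_le (by linarith) hn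
    _ ≤ 1 / ((α + 1) * (2 * α + 5)) * ((2 * α + 9) / (2 * (2 * α + 5))) := hconst

theorem jacobiPt_one_le_jacobiPt (hα : 1 ≤ α) (hz0 : 0 ≤ z) (hz : (2 * α + 5) * z ≤ 1) {n : ℕ}
    (hn : 1 ≤ n) :
    jacobiPt 1 α (-1 / 2) (2 * z - 1) ≤ jacobiPt n α (-1 / 2) (2 * z - 1) := by
  rcases lt_or_ge n 4 with hn4 | hn4
  · interval_cases n
    · exact le_rfl
    · exact jacobiPt_one_le_jacobiPt_two (by linarith) hz
    · exact jacobiPt_one_le_jacobiPt_three (by linarith) hz0 hz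
  · exact (jacobiPt_one_le_neg_one_div (by linarith) hz).trans
      (neg_le_of_abs_le (abs_jacobiPt_le_one_div hα hz0 hz hn4))

end Comparison

section LinearProgramming

theorem one_sub_one_div_le_of_forall_le_jacobiPt {α β s q : ℝ} {k : ℕ} {f : ℕ → ℝ} (hα : -1 < α)
    (hq : q < 0) (hle : ∀ i, 1 ≤ i → i ≤ k → q ≤ jacobiPt i α β s) (hf0 : 0 < f 0)
    (hf : ∀ i, 1 ≤ i → i ≤ k → 0 ≤ f i)
    (hneg : ∑ i ∈ range (k + 1), f i * jacobiP i α β s ≤ 0) :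
    1 - 1 / q ≤ (∑ i ∈ range (k + 1), f i * jacobiP i α β 1) / f 0 := by
  rw [sum_range_succ', jacobiP_zero, mul_one] at hneg ⊢
  have hsum : q * ∑ i ∈ range k, f (i + 1) * jacobiP (i + 1) α β 1 ≤
      ∑ i ∈ range k, f (i + 1) * jacobiP (i + 1) α β s := by
    rw [mul_sum]
    refine sum_le_sum fun i hi => ?_
    have hik : i + 1 ≤ k := mem_range.1 hi
    have hterm : q * jacobiP (i + 1) α β 1 ≤ jacobiP (i + 1) α β s :=
      (le_div_iff₀ (jacobiP_apply_one_pos hα _ _)).1 (hle (i + 1) i.succ_pos hik)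
    rw [mul_left_comm]
    exact mul_le_mul_of_nonneg_left hterm (hf (i + 1) i.succ_pos hik)
  have hrest : -f 0 / q ≤ ∑ i ∈ range k, f (i + 1) * jacobiP (i + 1) α β 1 := by
    rw [div_le_iff_of_neg hq]
    linarith
  rw [le_div_iff₀ hf0]
  linarith [show (1 - 1 / q) * f 0 = f 0 + -f 0 / q by ring]

theorem lp_bound_optimal_beta_half_general {α s : ℝ} (hα : 1 ≤ α) (hs0 : -1 ≤ s)
    (hs1 : s ≤ -(2 * α + 3) / (2 * α + 5)) {k : ℕ} {f : ℕ → ℝ} (hf0 : 0 < f 0)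
    (hf : ∀ i, 1 ≤ i → i ≤ k → 0 ≤ f i)
    (hneg : ∑ i ∈ range (k + 1), f i * jacobiP i α (-1 / 2) s ≤ 0) :
    1 - 1 / jacobiPt 1 α (-1 / 2) s ≤
      (∑ i ∈ range (k + 1), f i * jacobiP i α (-1 / 2) 1) / f 0 := by
  obtain ⟨z, rfl⟩ : ∃ z, s = 2 * z - 1 := ⟨(s + 1) / 2, by ring⟩
  have hz0 : 0 ≤ z := by linarith
  have hz : (2 * α + 5) * z ≤ 1 := by
    rw [le_div_iff₀ (by linarith)] at hs1
    linarith
  have hq : jacobiPt 1 α (-1 / 2) (2 * z - 1) < 0 :=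
    (jacobiPt_one_le_neg_one_div (by linarith) hz).trans_lt (neg_neg_of_pos (by positivity))
  exact one_sub_one_div_le_of_forall_le_jacobiPt (by linarith) hq
    (fun i hi _ => jacobiPt_one_le_jacobiPt hα hz0 hz hi) hf0 hf hneg

end LinearProgramming

/-- Optimality of the degree-one polynomial in the Delsarte linear programming bound for
the real sphere (`β = -1/2`): for `α ≥ 1` and `-1 < s ≤ -(2α+3)/(2α+5)`, any feasible
polynomial `f(t) = Σ_{i=0}^k f_i P_i^{(α,-1/2)}(t)` with `f₀ > 0`, `f_i ≥ 0`, and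
`f(t) ≤ 0` on `[-1, s]` satisfies `f(1)/f₀ ≥ 1 - 1/P̃₁^{(α,-1/2)}(s)`. -/
theorem lp_bound_optimal_beta_half (α s : ℝ) (hα : 1 ≤ α)
    (hs0 : -1 < s) (hs1 : s ≤ -(2 * α + 3) / (2 * α + 5))
    (k : ℕ) (f : ℕ → ℝ) (hf0 : 0 < f 0)
    (hf : ∀ i, 1 ≤ i → i ≤ k → 0 ≤ f i)
    (hneg : ∀ t, -1 ≤ t → t ≤ s →
      (∑ i ∈ Finset.range (k + 1), f i * jacobiP i α (-1/2) t) ≤ 0) :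
    (∑ i ∈ Finset.range (k + 1), f i * jacobiP i α (-1/2) 1) / f 0 ≥
      1 - 1 / jacobiPt 1 α (-1/2) s :=
  lp_bound_optimal_beta_half_general hα hs0.le hs1 hf0 hf (hneg s hs0.le le_rfl)
end

section
/- (Sonine–Pölya theorem) Let a < b be reals and let k, φ, y : ℝ → ℝ be functions such that k and φ are positive on [a, b], the product k·φ is differentiable and monotone nondecreasing on [a, b], y is differentiable, k·y′ is differentiable, and y satisfies the differential equation (k(x) y′(x))′ + φ(x) y(x) = 0 on [a, b]. Then for all x₁, x₂ ∈ [a, b] with x₁ ≤ x₂ and y′(x₁) = y′(x₂) = 0, one has |y(x₂)| ≤ |y(x₁)|. -/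
open Set

/-!
For `q = kφ`, the Sonine function `f = y² + (k y')² / q` dominates `y²` and equals it at critical
points of `y`. To see that `f` is nonincreasing without differentiating `q`, fix `x` and freeze the
coefficient at `q x`. By the differential equation, the frozen function
`t ↦ y t ^ 2 + (k t * y' t) ^ 2 / q x` has derivative zero at `x`; as `q` is nondecreasing, it lies
above `f` to the right of `x` and below `f` to the left. So the slopes of `f` based at `x` are
eventually smaller than any `ε > 0`, which forces `f` to be nonincreasing even where it jumps.
-/

open Filter Topology

theorem antitoneOn_of_eventually_le {α β : Type*} [ConditionallyCompleteLinearOrder α]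
    [TopologicalSpace α] [OrderTopology α] [DenselyOrdered α] [Preorder β] {f : α → β} {I : Set α}
    [I.OrdConnected]
    (hf : ∀ x ∈ I, ∀ᶠ z in 𝓝[I] x, (x ≤ z → f z ≤ f x) ∧ (z ≤ x → f x ≤ f z)) :
    AntitoneOn f I := by
  intro u hu v hv huv
  have hsub : Icc u v ⊆ I := Set.Icc_subset I hu hv
  set S := {z ∈ Icc u v | f z ≤ f u}
  have hSu : u ∈ S := ⟨left_mem_Icc.2 huv, le_rfl⟩
  have hSv : v ∈ upperBounds S := fun z hz => hz.1.2
  obtain ⟨c, hc⟩ : ∃ c, IsLUB S c := ⟨sSup S, isLUB_csSup ⟨u, hSu⟩ ⟨v, hSv⟩⟩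
  have hcuv : c ∈ Icc u v := ⟨hc.1 hSu, hc.2 hSv⟩
  -- `S` need not be closed, but `f` decreases up to its supremum.
  have hfc : f c ≤ f u := by
    have := hc.nhdsWithin_neBot ⟨u, hSu⟩
    have hSI : S ⊆ I := fun z hz => hsub hz.1
    have hleft := (hf c (hsub hcuv)).filter_mono (nhdsWithin_mono c hSI)
    obtain ⟨z, hz, hzS⟩ := (hleft.and self_mem_nhdsWithin).exists
    exact (hz.2 (hc.1 hzS)).trans hzS.2
  obtain hcv | hcv := hcuv.2.eq_or_lt
  · exact hcv ▸ hfc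
  · exfalso
    have := left_nhdsWithin_Ioc_neBot hcv
    have hIocI : Ioc c v ⊆ I := fun z hz => hsub ⟨hcuv.1.trans hz.1.le, hz.2⟩
    have hright := (hf c (hsub hcuv)).filter_mono (nhdsWithin_mono c hIocI)
    obtain ⟨z, hz, hcz, hzv⟩ := (hright.and self_mem_nhdsWithin).exists
    have hzS : z ∈ S := ⟨⟨hcuv.1.trans hcz.le, hzv⟩, (hz.1 hcz.le).trans hfc⟩
    exact (hc.1 hzS).not_gt hcz

theorem antitoneOn_of_eventually_slope_lt {f : ℝ → ℝ} {I : Set ℝ} [I.OrdConnected]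
    (hf : ∀ x ∈ I, ∀ ε > 0, ∀ᶠ z in 𝓝[I \ {x}] x, slope f x z < ε) : AntitoneOn f I := by
  have tilt : ∀ ε > 0, AntitoneOn (fun t => f t - ε * t) I := by
    refine fun ε hε => antitoneOn_of_eventually_le fun x hx => ?_
    have hslope := eventually_nhdsWithin_iff.1 (hf x hx ε hε)
    filter_upwards [mem_nhdsWithin_of_mem_nhds hslope, self_mem_nhdsWithin] with z hz hzI
    obtain rfl | hzx := eq_or_ne z x
    · exact ⟨fun _ => le_rfl, fun _ => le_rfl⟩
    have hlt : slope f x z < ε := hz ⟨hzI, hzx⟩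
    have hfz : (z - x) * slope f x z = f z - f x := sub_smul_slope f x z
    constructor <;> intro hxz <;> nlinarith
  intro u hu v hv huv
  have hlim : Tendsto (fun ε => f u + ε * (v - u)) (𝓝[>] 0) (𝓝 (f u)) := by
    refine Tendsto.mono_left ?_ nhdsWithin_le_nhds
    exact Continuous.tendsto' (by fun_prop) 0 (f u) (by ring)
  refine ge_of_tendsto hlim (eventually_mem_nhdsWithin.mono fun ε hε => ?_)
  linarith [tilt ε hε hu hv huv]

/-- The Sonine function `y² + p² / q`, where `p` stands for `k y'` and `q` for `k φ`. Keeping `q` as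
a free parameter allows it to be frozen to a constant. -/
noncomputable def sonineFunction (q y p : ℝ → ℝ) (x : ℝ) : ℝ :=
  y x ^ 2 + p x ^ 2 / q x

section SonineFunction

variable {I : Set ℝ} {q y p : ℝ → ℝ} {x : ℝ}

theorem sq_le_sonineFunction (hq : 0 ≤ q x) : y x ^ 2 ≤ sonineFunction q y p x :=
  le_add_of_nonneg_right (div_nonneg (sq_nonneg _) hq)

theorem sonineFunction_of_eq_zero (hp : p x = 0) : sonineFunction q y p x = y x ^ 2 := by
  simp [sonineFunction, hp]

theorem hasDerivWithinAt_sonineFunction_const {y' p' : ℝ} (c : ℝ)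
    (hy : HasDerivWithinAt y y' I x) (hp : HasDerivWithinAt p p' I x) :
    HasDerivWithinAt (sonineFunction (fun _ => c) y p) (2 * (y x * y' + p x * p' / c)) I x := by
  refine ((hy.fun_pow 2).fun_add ((hp.fun_pow 2).div_const c)).congr_deriv ?_
  push_cast
  ring

theorem slope_sonineFunction_le (hpos : ∀ t ∈ I, 0 < q t) (hq : MonotoneOn q I) (hx : x ∈ I)
    {z : ℝ} (hz : z ∈ I) :
    slope (sonineFunction q y p) x z ≤ slope (sonineFunction (fun _ => q x) y p) x z := by
  simp only [slope_def_field, sonineFunction]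
  obtain hxz | hzx := le_total x z
  · have := hpos x hx
    have := hq hx hz hxz
    have := sub_nonneg.2 hxz
    gcongr
  · have := hpos z hz
    have := hq hz hx hzx
    refine div_le_div_of_nonpos_of_le (sub_nonpos.2 hzx) ?_
    gcongr

theorem antitoneOn_sonineFunction [I.OrdConnected] {k φ y' : ℝ → ℝ}
    (hpos : ∀ x ∈ I, 0 < k x * φ x) (hmono : MonotoneOn (fun x => k x * φ x) I)
    (hy : ∀ x ∈ I, HasDerivWithinAt y (y' x) I x)
    (hode : ∀ x ∈ I, HasDerivWithinAt (fun t => k t * y' t) (-(φ x * y x)) I x) :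
    AntitoneOn (sonineFunction (fun x => k x * φ x) y fun x => k x * y' x) I := by
  refine antitoneOn_of_eventually_slope_lt fun x hx ε hε => ?_
  have hfrozen : HasDerivWithinAt
      (sonineFunction (fun _ => k x * φ x) y fun t => k t * y' t) 0 I x := by
    refine (hasDerivWithinAt_sonineFunction_const (k x * φ x) (hy x hx) (hode x hx)).congr_deriv ?_
    have hkφ : k x * φ x ≠ 0 := (hpos x hx).ne'
    field_simp [left_ne_zero_of_mul hkφ, right_ne_zero_of_mul hkφ]
    ring
  filter_upwards [hfrozen.limsup_slope_le hε, self_mem_nhdsWithin] with z hz hzI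
  exact (slope_sonineFunction_le hpos hmono hx hzI.1).trans_lt hz

end SonineFunction

theorem sonine_polya_general {I : Set ℝ} [I.OrdConnected] {k φ y y' : ℝ → ℝ}
    (hpos : ∀ x ∈ I, 0 < k x * φ x) (hmono : MonotoneOn (fun x => k x * φ x) I)
    (hy : ∀ x ∈ I, HasDerivWithinAt y (y' x) I x)
    (hode : ∀ x ∈ I, HasDerivWithinAt (fun t => k t * y' t) (-(φ x * y x)) I x)
    {x₁ x₂ : ℝ} (hx₁ : x₁ ∈ I) (hx₂ : x₂ ∈ I) (h12 : x₁ ≤ x₂) (hcrit : y' x₁ = 0) :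
    |y x₂| ≤ |y x₁| := by
  set f := sonineFunction (fun x => k x * φ x) y fun x => k x * y' x
  refine sq_le_sq.1 ?_
  calc
    y x₂ ^ 2 ≤ f x₂ := sq_le_sonineFunction (hpos x₂ hx₂).le
    _ ≤ f x₁ := antitoneOn_sonineFunction hpos hmono hy hode hx₁ hx₂ h12
    _ = y x₁ ^ 2 := sonineFunction_of_eq_zero (by simp [hcrit])

/-- **Sonine–Pölya theorem**: let `y` solve `(k y')' + φ y = 0` on `[a, b]`, with `k, φ`
positive on `[a, b]` and `k·φ` differentiable and monotone nondecreasing on `[a, b]`.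
Then the values of `|y|` at critical points of `y` are nonincreasing: if
`x₁ ≤ x₂` in `[a, b]` and `y'(x₁) = y'(x₂) = 0`, then `|y(x₂)| ≤ |y(x₁)|`. -/
theorem sonine_polya (a b : ℝ) (hab : a < b) (k φ y : ℝ → ℝ)
    (hk : ∀ x ∈ Icc a b, 0 < k x)
    (hφ : ∀ x ∈ Icc a b, 0 < φ x)
    (hkφdiff : DifferentiableOn ℝ (fun x => k x * φ x) (Icc a b))
    (hkφmono : MonotoneOn (fun x => k x * φ x) (Icc a b))
    (hy : Differentiable ℝ y)
    (hky' : Differentiable ℝ (fun x => k x * deriv y x))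
    (hode : ∀ x ∈ Icc a b, deriv (fun t => k t * deriv y t) x + φ x * y x = 0)
    (x₁ x₂ : ℝ) (hx₁ : x₁ ∈ Icc a b) (hx₂ : x₂ ∈ Icc a b) (h12 : x₁ ≤ x₂)
    (hc₁ : deriv y x₁ = 0) (hc₂ : deriv y x₂ = 0) :
    |y x₂| ≤ |y x₁| := by
  have hode' : ∀ x ∈ Icc a b,
      HasDerivWithinAt (fun t => k t * deriv y t) (-(φ x * y x)) (Icc a b) x := fun x hx =>
    eq_neg_of_add_eq_zero_left (hode x hx) ▸ (hky' x).hasDerivAt.hasDerivWithinAt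
  exact sonine_polya_general (fun x hx => mul_pos (hk x hx) (hφ x hx)) hkφmono
    (fun x _ => (hy x).hasDerivAt.hasDerivWithinAt) hode' hx₁ hx₂ h12 hc₁
end
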